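/- arXiv:math/0606451 — 2 statements merged into one kernel-verified Lean document; each statement's English description precedes it below -/
import Mathlib

section
/- RR_5(11,5) = 820. That is, 820 is the least positive integer N such that every 2-coloring χ of {1,…,N} admits x, y, z ∈ {1,…,N} with 5x + 11y = z and χ(x) = χ(y) = χ(z) = 0, or x, y, z ∈ {1,…,N} with 5x + 5y = z and χ(x) = χ(y) = χ(z) = 1. -/
/-!
Upper bound: if a coloring `χ` avoids both equations up to `820`, then propagating forced colors
refutes `χ 1 = 1`, then `χ 1 = χ 3 = 0`, and finally `χ 1 = 0, χ 3 = 1`.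

Lower bound: for coprime `t ≥ 3` and `q` with `2t ≤ q < 5t/2`, give `1` and `2` color `0`. Color `1`
then starts at `3`, so `6t = t·3 + t·3` must begin a new block of color `0`. That block lasts until
`6t² + q`, the least value of `tx + qy` involving one of its members, but it has a hole at
`2(t + q) = t·2 + q·2`, which must have color `1`. Numbers from `6t² + q` on have color `1`, except
that the multiples of `t` keep color `0` up to `4t(t + q)`, twice `t` times the hole. The first
solution in color `1` is then `t(6t² + q) + t·3`, which is `820` for `t = 5`, `q = 11`.
-/

/-- The coloring `χ` admits a solution of `a * x + b * y = z` in `{1, …, N}` that is monochromatic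
of color `i`. -/
def HasMonoSol (a b N : ℕ) (χ : ℕ → Fin 2) (i : Fin 2) : Prop :=
  ∃ x y z : ℕ, x ∈ Finset.Icc 1 N ∧ y ∈ Finset.Icc 1 N ∧ z ∈ Finset.Icc 1 N ∧
    a * x + b * y = z ∧ χ x = i ∧ χ y = i ∧ χ z = i

/-- The coloring `χ` avoids solutions of `a * x + b * y = z` in `{1, …, N}` monochromatic of color
`i`. Only `z ≤ N` is required, which for positive `a` and `b` bounds `x` and `y` as well. -/
def AvoidsMonoSol (a b N : ℕ) (χ : ℕ → Fin 2) (i : Fin 2) : Prop :=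
  ∀ ⦃x y z : ℕ⦄, 0 < x → 0 < y → a * x + b * y = z → z ≤ N → χ x = i → χ y = i → χ z ≠ i

theorem not_hasMonoSol_iff {a b N : ℕ} {χ : ℕ → Fin 2} {i : Fin 2} (ha : 0 < a) (hb : 0 < b) :
    ¬ HasMonoSol a b N χ i ↔ AvoidsMonoSol a b N χ i := by
  constructor
  · intro h x y z hx hy hxyz hz hχx hχy hχz
    have hxz : x ≤ a * x := Nat.le_mul_of_pos_left x ha
    have hyz : y ≤ b * y := Nat.le_mul_of_pos_left y hb
    exact h ⟨x, y, z, Finset.mem_Icc.2 (by omega), Finset.mem_Icc.2 (by omega),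
      Finset.mem_Icc.2 (by omega), hxyz, hχx, hχy, hχz⟩
  · rintro h ⟨x, y, z, hx, hy, hz, hxyz, hχx, hχy, hχz⟩
    rw [Finset.mem_Icc] at hx hy hz
    exact h hx.1 hy.1 hxyz hz.2 hχx hχy hχz

theorem isLeast_hasMonoSol {t q s N : ℕ} (ht : 0 < t) (hq : 0 < q) (hs : 0 < s) (hN : 0 < N)
    (hforced : ∀ χ, AvoidsMonoSol t q N χ 0 → ¬ AvoidsMonoSol t s N χ 1)
    (havoid : ∀ M < N, ∃ χ, AvoidsMonoSol t q M χ 0 ∧ AvoidsMonoSol t s M χ 1) :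
    IsLeast {M : ℕ | 0 < M ∧ ∀ χ : ℕ → Fin 2, HasMonoSol t q M χ 0 ∨ HasMonoSol t s M χ 1} N := by
  refine ⟨⟨hN, fun χ ↦ ?_⟩, fun M ⟨_, hM⟩ ↦ ?_⟩
  · by_contra! ⟨h₀, h₁⟩
    exact hforced χ ((not_hasMonoSol_iff ht hq).1 h₀) ((not_hasMonoSol_iff ht hs).1 h₁)
  · by_contra! hlt
    obtain ⟨χ, h₀, h₁⟩ := havoid M hlt
    exact (hM χ).elim ((not_hasMonoSol_iff ht hq).2 h₀) ((not_hasMonoSol_iff ht hs).2 h₁)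

namespace AvoidsMonoSol

variable {a b N x y z : ℕ} {χ : ℕ → Fin 2} {i j : Fin 2}

theorem color_sum (h : AvoidsMonoSol a b N χ i) (hx : χ x = i) (hy : χ y = i)
    (hxyz : a * x + b * y = z := by omega) (hz : z ≤ N := by omega) (hx₀ : 0 < x := by omega)
    (hy₀ : 0 < y := by omega) (hij : i ≠ j := by decide) : χ z = j := by
  have := h hx₀ hy₀ hxyz hz hx hy
  omega

theorem color_left (h : AvoidsMonoSol a b N χ i) (hy : χ y = i) (hz : χ z = i)
    (hxyz : a * x + b * y = z := by omega) (hzN : z ≤ N := by omega) (hx₀ : 0 < x := by omega)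
    (hy₀ : 0 < y := by omega) (hij : i ≠ j := by decide) : χ x = j := by
  have : χ x ≠ i := fun hx ↦ h hx₀ hy₀ hxyz hzN hx hy hz
  omega

theorem color_right (h : AvoidsMonoSol a b N χ i) (hx : χ x = i) (hz : χ z = i)
    (hxyz : a * x + b * y = z := by omega) (hzN : z ≤ N := by omega) (hx₀ : 0 < x := by omega)
    (hy₀ : 0 < y := by omega) (hij : i ≠ j := by decide) : χ y = j := by
  have : χ y ≠ i := fun hy ↦ h hx₀ hy₀ hxyz hzN hx hy hz
  omega

theorem color_diag (h : AvoidsMonoSol a b N χ i) (hz : χ z = i)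
    (hxz : a * x + b * x = z := by omega) (hzN : z ≤ N := by omega) (hx₀ : 0 < x := by omega)
    (hij : i ≠ j := by decide) : χ x = j := by
  have : χ x ≠ i := fun hx ↦ h hx₀ hx₀ hxz hzN hx hx hz
  omega

end AvoidsMonoSol

section UpperBound

variable {N : ℕ} {χ : ℕ → Fin 2}

theorem color_one_eq_zero (hN : 805 ≤ N) (h₀ : AvoidsMonoSol 5 11 N χ 0)
    (h₁ : AvoidsMonoSol 5 5 N χ 1) : χ 1 = 0 := by
  by_contra hne
  have c1 : χ 1 = 1 := by omega
  have c10 : χ 10 = 0 := h₁.color_sum c1 c1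
  have c160 : χ 160 = 1 := h₀.color_sum c10 c10
  have c805 : χ 805 = 0 := h₁.color_sum c1 c160
  have c16 : χ 16 = 0 := h₁.color_diag c160
  have c190 : χ 190 = 1 := h₀.color_sum c16 c10
  have c19 : χ 19 = 0 := h₁.color_diag c190
  have c205 : χ 205 = 1 := h₀.color_sum c19 c10
  have c40 : χ 40 = 0 := h₁.color_right c1 c205
  have c73 : χ 73 = 1 := h₀.color_left c40 c805
  have c55 : χ 55 = 1 := h₀.color_right c40 c805
  have c640 : χ 640 = 0 := h₁.color_sum c55 c73
  have c640' : χ 640 = 1 := h₀.color_sum c40 c40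
  omega

theorem color_two_eq_zero (hN : 320 ≤ N) (h₀ : AvoidsMonoSol 5 11 N χ 0)
    (h₁ : AvoidsMonoSol 5 5 N χ 1) (c1 : χ 1 = 0) (c3 : χ 3 = 0) : χ 2 = 0 := by
  have c16 : χ 16 = 1 := h₀.color_sum c1 c1
  have c48 : χ 48 = 1 := h₀.color_sum c3 c3
  have c320 : χ 320 = 0 := h₁.color_sum c16 c48
  have c20 : χ 20 = 1 := h₀.color_diag c320
  exact h₁.color_diag c20

theorem color_four_eq_zero (hN : 455 ≤ N) (h₀ : AvoidsMonoSol 5 11 N χ 0)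
    (h₁ : AvoidsMonoSol 5 5 N χ 1) (c2 : χ 2 = 0) (c3 : χ 3 = 0) : χ 4 = 0 := by
  have c48 : χ 48 = 1 := h₀.color_sum c3 c3
  have c43 : χ 43 = 1 := h₀.color_sum c2 c3
  have c455 : χ 455 = 0 := h₁.color_sum c48 c43
  have c40 : χ 40 = 1 := h₀.color_right c3 c455
  exact h₁.color_diag c40

theorem color_five_eq_zero (hN : 560 ≤ N) (h₀ : AvoidsMonoSol 5 11 N χ 0)
    (h₁ : AvoidsMonoSol 5 5 N χ 1) (c2 : χ 2 = 0) (c3 : χ 3 = 0) (c4 : χ 4 = 0) : χ 5 = 0 := by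
  have c53 : χ 53 = 1 := h₀.color_sum c4 c3
  have c59 : χ 59 = 1 := h₀.color_sum c3 c4
  have c560 : χ 560 = 0 := h₁.color_sum c53 c59
  have c50 : χ 50 = 1 := h₀.color_right c2 c560
  exact h₁.color_diag c50

theorem color_three_eq_one (hN : 560 ≤ N) (h₀ : AvoidsMonoSol 5 11 N χ 0)
    (h₁ : AvoidsMonoSol 5 5 N χ 1) (c1 : χ 1 = 0) : χ 3 = 1 := by
  by_contra hne
  have c3 : χ 3 = 0 := by omega
  have c2 : χ 2 = 0 := color_two_eq_zero (by omega) h₀ h₁ c1 c3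
  have c4 : χ 4 = 0 := color_four_eq_zero (by omega) h₀ h₁ c2 c3
  have c5 : χ 5 = 0 := color_five_eq_zero hN h₀ h₁ c2 c3 c4
  have c16 : χ 16 = 1 := h₀.color_sum c1 c1
  have c160 : χ 160 = 0 := h₁.color_sum c16 c16
  have c10 : χ 10 = 1 := h₀.color_diag c160
  have c100 : χ 100 = 0 := h₁.color_sum c10 c10
  have c31 : χ 31 = 1 := h₀.color_sum c4 c1
  have c80 : χ 80 = 1 := h₀.color_sum c5 c5
  have c555 : χ 555 = 0 := h₁.color_sum c31 c80
  have c555' : χ 555 = 1 := h₀.color_sum c100 c5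
  omega

theorem not_avoidsMonoSol_of_color_three_eq_one (hN : 820 ≤ N) (h₀ : AvoidsMonoSol 5 11 N χ 0)
    (c1 : χ 1 = 0) (c3 : χ 3 = 1) : ¬ AvoidsMonoSol 5 5 N χ 1 := by
  intro h₁
  have c16 : χ 16 = 1 := h₀.color_sum c1 c1
  have c30 : χ 30 = 0 := h₁.color_sum c3 c3
  have c161 : χ 161 = 1 := h₀.color_sum c30 c1
  have c820 : χ 820 = 0 := h₁.color_sum c161 c3
  have c98 : χ 98 = 1 := h₀.color_left c30 c820
  have c480 : χ 480 = 1 := h₀.color_sum c30 c30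
  have c48 : χ 48 = 0 := h₁.color_diag c480
  have c570 : χ 570 = 0 := h₁.color_sum c16 c98
  have c570' : χ 570 = 1 := h₀.color_sum c48 c30
  omega

theorem not_avoidsMonoSol_five_five (hN : 820 ≤ N) (h₀ : AvoidsMonoSol 5 11 N χ 0) :
    ¬ AvoidsMonoSol 5 5 N χ 1 := fun h₁ ↦
  have c1 : χ 1 = 0 := color_one_eq_zero (by omega) h₀ h₁
  have c3 : χ 3 = 1 := color_three_eq_one (by omega) h₀ h₁ c1
  not_avoidsMonoSol_of_color_three_eq_one hN h₀ c1 c3 h₁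

end UpperBound

section LowerBound

variable {t q N : ℕ}

/-- The numbers of color `0` in the extremal coloring for the equations `t * x + q * y = z` and
`t * x + t * y = z`. -/
def InZeroClass (t q n : ℕ) : Prop :=
  n ≤ 2 ∨ 6 * t ≤ n ∧ n ≠ 2 * (t + q) ∧
    (n < 6 * t ^ 2 + q ∨ t ∣ n ∧ n ≤ 4 * t * (t + q))

open Classical in
/-- The coloring with color classes `InZeroClass t q` and its complement, which avoids both
equations on `{1, …, t * (6 * t ^ 2 + q + 3) - 1}`. -/
noncomputable def extremalColoring (t q n : ℕ) : Fin 2 :=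
  if InZeroClass t q n then 0 else 1

theorem extremalColoring_eq_zero_iff {n : ℕ} : extremalColoring t q n = 0 ↔ InZeroClass t q n := by
  simp [extremalColoring]

theorem extremalColoring_eq_one_iff {n : ℕ} :
    extremalColoring t q n = 1 ↔ ¬ InZeroClass t q n := by
  simp [extremalColoring]

theorem InZeroClass.le_two_or_ge {n : ℕ} (h : InZeroClass t q n) : n ≤ 2 ∨ 6 * t ≤ n :=
  h.imp_right And.left

theorem not_inZeroClass_add_of_le_two {x y : ℕ} (hqt : 2 * q < 5 * t) (htq : 2 < t + q)
    (hx₀ : 0 < x) (hy₀ : 0 < y) (hx : x ≤ 2) (hy : y ≤ 2) :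
    ¬ InZeroClass t q (t * x + q * y) := by
  rintro (hle | ⟨hge, hne, -⟩) <;> interval_cases x <;> interval_cases y <;> omega

theorem not_inZeroClass_add_of_ge {x y : ℕ} (ht : 3 ≤ t) (htq : 2 * t ≤ q) (hcop : t.Coprime q)
    (hx₀ : 0 < x) (hy₀ : 0 < y) (hy : InZeroClass t q y) (hxy : 6 * t ≤ x ∨ 6 * t ≤ y) :
    ¬ InZeroClass t q (t * x + q * y) := by
  have hge : 6 * t ^ 2 + q ≤ t * x + q * y := by
    rcases hxy with hx | hy <;> nlinarith
  rintro (hle | ⟨-, -, hlt | ⟨hdvd, hle⟩⟩)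
  · nlinarith
  · omega
  · have hty : t ∣ y := hcop.dvd_of_dvd_mul_left ((Nat.dvd_add_right (dvd_mul_right t x)).1 hdvd)
    have hy6 : 6 * t ≤ y := by
      have := Nat.le_of_dvd hy₀ hty
      exact hy.le_two_or_ge.resolve_left (by omega)
    nlinarith

theorem avoidsMonoSol_zero_extremalColoring (ht : 3 ≤ t) (htq : 2 * t ≤ q) (hqt : 2 * q < 5 * t)
    (hcop : t.Coprime q) : AvoidsMonoSol t q N (extremalColoring t q) 0 := by
  rintro x y _ hx₀ hy₀ rfl - hx hy
  rw [extremalColoring_eq_zero_iff] at hx hy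
  rw [Ne, extremalColoring_eq_zero_iff]
  by_cases hle : x ≤ 2 ∧ y ≤ 2
  · exact not_inZeroClass_add_of_le_two hqt (by omega) hx₀ hy₀ hle.1 hle.2
  · have hxy : 6 * t ≤ x ∨ 6 * t ≤ y := by
      have := hx.le_two_or_ge
      have := hy.le_two_or_ge
      omega
    exact not_inZeroClass_add_of_ge ht htq hcop hx₀ hy₀ hy hxy

theorem lt_of_not_inZeroClass_mul {m : ℕ} (ht : 3 ≤ t) (hcop : t.Coprime q) (hm : 6 ≤ m)
    (h : ¬ InZeroClass t q (t * m)) : 4 * (t + q) < m := by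
  have hne : t * m ≠ 2 * (t + q) := fun heq ↦ by
    have hdvd : t ∣ 2 * (t + q) := heq ▸ dvd_mul_right t m
    have hcop' : t.Coprime (t + q) := by simpa using hcop
    have := Nat.le_of_dvd two_pos (hcop'.dvd_of_dvd_mul_right hdvd)
    omega
  by_contra! hle
  refine h (Or.inr ⟨by nlinarith, hne, Or.inr ⟨dvd_mul_right t m, ?_⟩⟩)
  calc t * m ≤ t * (4 * (t + q)) := Nat.mul_le_mul_left t hle
    _ = 4 * t * (t + q) := by ring

theorem le_of_not_inZeroClass {n : ℕ} (htq : 2 * t ≤ q) (hn : 2 * (t + q) < n)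
    (h : ¬ InZeroClass t q n) : 6 * t ^ 2 + q ≤ n := by
  by_contra! hlt
  exact h (Or.inr ⟨by omega, by omega, Or.inl hlt⟩)

theorem avoidsMonoSol_one_extremalColoring (ht : 3 ≤ t) (htq : 2 * t ≤ q) (hcop : t.Coprime q)
    (hN : N < t * (6 * t ^ 2 + q + 3)) : AvoidsMonoSol t t N (extremalColoring t q) 1 := by
  rintro x y _ - - rfl hz hx hy
  rw [extremalColoring_eq_one_iff] at hx hy
  rw [Ne, extremalColoring_eq_one_iff, ← mul_add]
  intro hxy
  have hx3 : 3 ≤ x := by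
    by_contra! hlt
    exact hx (Or.inl (by omega))
  have hy3 : 3 ≤ y := by
    by_contra! hlt
    exact hy (Or.inl (by omega))
  have hlt : 4 * (t + q) < x + y := lt_of_not_inZeroClass_mul ht hcop (by omega) hxy
  have hge : 6 * t ^ 2 + q + 3 ≤ x + y := by
    rcases (by omega : 2 * (t + q) < x ∨ 2 * (t + q) < y) with hbig | hbig
    · have := le_of_not_inZeroClass htq hbig hx
      omega
    · have := le_of_not_inZeroClass htq hbig hy
      omega
  have := Nat.mul_le_mul_left t hge
  linarith

end LowerBound

/-- `RR_5(11,5) = 820`: the least positive `N` such that every 2-coloring of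
`{1,…,N}` admits a solution to `5x + 11y = z` monochromatic of color 0 or a
solution to `5x + 5y = z` monochromatic of color 1 is `820`. -/
theorem RR_5_11_5 :
    IsLeast {N : ℕ | 0 < N ∧ ∀ χ : ℕ → Fin 2,
      (∃ x y z : ℕ, x ∈ Finset.Icc 1 N ∧ y ∈ Finset.Icc 1 N ∧
        z ∈ Finset.Icc 1 N ∧ 5 * x + 11 * y = z ∧ χ x = 0 ∧ χ y = 0 ∧ χ z = 0) ∨
      (∃ x y z : ℕ, x ∈ Finset.Icc 1 N ∧ y ∈ Finset.Icc 1 N ∧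
        z ∈ Finset.Icc 1 N ∧ 5 * x + 5 * y = z ∧ χ x = 1 ∧ χ y = 1 ∧ χ z = 1)}
      820 :=
  isLeast_hasMonoSol (by norm_num) (by norm_num) (by norm_num) (by norm_num)
    (fun _ ↦ not_avoidsMonoSol_five_five le_rfl) fun _ hM ↦
      ⟨extremalColoring 5 11,
        avoidsMonoSol_zero_extremalColoring (by norm_num) (by norm_num) (by norm_num) (by norm_num),
        avoidsMonoSol_one_extremalColoring (by norm_num) (by norm_num) (by norm_num) hM⟩
end

section
/- RR_2(10,9) = 282. That is, 282 is the least positive integer N such that every 2-coloring χ of {1,…,N} admits x, y, z ∈ {1,…,N} with 2x + 10y = z and χ(x) = χ(y) = χ(z) = 0, or x, y, z ∈ {1,…,N} with 2x + 9y = z and χ(x) = χ(y) = χ(z) = 1. -/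
/-!
For the lower bound, color `[1, t + s)` with `1`, the next block up to `M = (t + q) * (t + s)` with
`0`, and from `M` on give color `1` exactly to the multiples of a common divisor `d` of `t` and `q`.
Color `0` never contains a solution. In color `1`, `z ≥ t + s` forces `z ≥ M` and `d ∣ z`; hence
`x` or `y` is at least `M` and, if `d` is coprime to `s`, also `d ∣ y`, so `z ≥ t * M + s * d`.

For the upper bound, `χ 1 = c` forces the colors of `t + q`, `t + s` and `M`, since
`t * n + q * n = (t + q) * n`. For `(t, q, s) = (2, 10, 9)` these three values propagate to a
contradiction in each of the cases `χ 1 = 0`, `χ 1 = 1 ∧ χ 2 = 0` and `χ 1 = χ 2 = 1`.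
-/

/-- The equation `t * x + q * y = z` has a solution in `{1, …, N}` all of whose entries receive
color `c` under `χ`. Only the values of `χ` on `{1, …, N}` matter. -/
def HasMonoSolution {κ : Type*} (χ : ℕ → κ) (N t q : ℕ) (c : κ) : Prop :=
  ∃ x y z : ℕ, x ∈ Finset.Icc 1 N ∧ y ∈ Finset.Icc 1 N ∧ z ∈ Finset.Icc 1 N ∧
    t * x + q * y = z ∧ χ x = c ∧ χ y = c ∧ χ z = c

/-- The property of `N` whose least instance is the off-diagonal Rado number `RR_t(q, s)`. -/
def ForcesMonoSolution (t q s N : ℕ) : Prop :=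
  0 < N ∧ ∀ χ : ℕ → Fin 2, HasMonoSolution χ N t q 0 ∨ HasMonoSolution χ N t s 1

/-- `(x, y, z)` is a solution of `t * x + q * y = z` in `{1, …, N}`. -/
def IsSolution (N t q x y z : ℕ) : Prop :=
  x ∈ Finset.Icc 1 N ∧ y ∈ Finset.Icc 1 N ∧ z ∈ Finset.Icc 1 N ∧ t * x + q * y = z

theorem HasMonoSolution.mono {κ : Type*} {χ : ℕ → κ} {M N t q : ℕ} {c : κ} (hMN : M ≤ N)
    (h : HasMonoSolution χ M t q c) : HasMonoSolution χ N t q c := by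
  obtain ⟨x, y, z, hx, hy, hz, h⟩ := h
  have Icc_subset : Finset.Icc 1 M ⊆ Finset.Icc 1 N := Finset.Icc_subset_Icc_right hMN
  exact ⟨x, y, z, Icc_subset hx, Icc_subset hy, Icc_subset hz, h⟩

section LowerBound

variable {t q s d N : ℕ}

/-- The coloring that attains the lower bound. The block `[t + s, (t + q) * (t + s))` has color
`0`; everything before it has color `1`, and after it only the multiples of `d` have color `1`. -/
def blockColoring (t q s d n : ℕ) : Fin 2 :=
  if n < t + s ∨ ((t + q) * (t + s) ≤ n ∧ d ∣ n) then 1 else 0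

theorem blockColoring_eq_one_iff {n : ℕ} :
    blockColoring t q s d n = 1 ↔ n < t + s ∨ ((t + q) * (t + s) ≤ n ∧ d ∣ n) := by
  unfold blockColoring
  split_ifs with h <;> simp [h]

theorem blockColoring_eq_zero_iff {n : ℕ} :
    blockColoring t q s d n = 0 ↔ t + s ≤ n ∧ ((t + q) * (t + s) ≤ n → ¬d ∣ n) := by
  simp [blockColoring]

theorem not_hasMonoSolution_blockColoring_zero (hdt : d ∣ t) (hdq : d ∣ q) :
    ¬HasMonoSolution (blockColoring t q s d) N t q 0 := by
  rintro ⟨x, y, z, -, -, -, rfl, hx, hy, hz⟩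
  rw [blockColoring_eq_zero_iff] at hx hy hz
  have block_end_le : (t + q) * (t + s) ≤ t * x + q * y := by
    rw [add_mul]
    exact add_le_add (Nat.mul_le_mul_left t hx.1) (Nat.mul_le_mul_left q hy.1)
  exact hz.2 block_end_le (dvd_add (hdt.mul_right x) (hdq.mul_right y))

theorem mul_add_mul_le_add_mul_of_coprime {M : ℕ} (hts : t ≤ s) (hdt : d ∣ t) (hds : d.Coprime s)
    (hM : s * d ≤ M) : t * M + s * d ≤ t + s * M := by
  rcases hts.eq_or_lt with rfl | hlt
  · rw [hds.eq_one_of_dvd hdt, mul_one, add_comm]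
  · calc t * M + s * d ≤ t * M + M := Nat.add_le_add_left hM _
      _ = (t + 1) * M := (Nat.succ_mul t M).symm
      _ ≤ s * M := Nat.mul_le_mul_right M hlt
      _ ≤ t + s * M := Nat.le_add_left _ _

theorem not_hasMonoSolution_blockColoring_one (ht : 0 < t) (hts : t ≤ s) (hsq : s ≤ q)
    (hdt : d ∣ t) (hds : d.Coprime s) (hN : N < t * ((t + q) * (t + s)) + s * d) :
    ¬HasMonoSolution (blockColoring t q s d) N t s 1 := by
  rintro ⟨x, y, z, hxN, hyN, hzN, rfl, hx, hy, hz⟩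
  rw [Finset.mem_Icc] at hxN hyN hzN
  rw [blockColoring_eq_one_iff] at hx hy hz
  have first_block_le : t + s ≤ t * x + s * y :=
    add_le_add (Nat.le_mul_of_pos_right t hxN.1) (Nat.le_mul_of_pos_right s hyN.1)
  obtain ⟨block_end_le, d_dvd_z⟩ := hz.resolve_left first_block_le.not_gt
  have d_dvd_y : d ∣ y :=
    hds.dvd_of_dvd_mul_left ((Nat.dvd_add_right (hdt.mul_right x)).1 d_dvd_z)
  have d_le_y : d ≤ y := Nat.le_of_dvd hyN.1 d_dvd_y
  have mul_d_le : s * d ≤ (t + q) * (t + s) :=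
    Nat.mul_le_mul (by omega) ((Nat.le_of_dvd ht hdt).trans (Nat.le_add_right t s))
  set M := (t + q) * (t + s)
  rcases hx with x_lt | ⟨M_le_x, -⟩
  · rcases hy with y_lt | ⟨M_le_y, -⟩
    · have z_lt_M : t * x + s * y < M := by
        calc t * x + s * y ≤ t * (t + s - 1) + s * (t + s - 1) := by gcongr <;> omega
          _ = (t + s) * (t + s - 1) := (add_mul _ _ _).symm
          _ < (t + s) * (t + q) := Nat.mul_lt_mul_of_pos_left (by omega) (by omega)
          _ = M := mul_comm _ _
      exact z_lt_M.not_ge block_end_le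
    · have M_le_z : t + s * M ≤ t * x + s * y :=
        add_le_add (Nat.le_mul_of_pos_right t hxN.1) (Nat.mul_le_mul_left s M_le_y)
      have bound_le : t * M + s * d ≤ t + s * M :=
        mul_add_mul_le_add_mul_of_coprime hts hdt hds mul_d_le
      omega
  · have bound_le : t * M + s * d ≤ t * x + s * y :=
      add_le_add (Nat.mul_le_mul_left t M_le_x) (Nat.mul_le_mul_left s d_le_y)
    omega

theorem ForcesMonoSolution.mul_add_mul_le (h : ForcesMonoSolution t q s N) (ht : 0 < t)
    (hts : t ≤ s) (hsq : s ≤ q) (hdt : d ∣ t) (hdq : d ∣ q) (hds : d.Coprime s) :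
    t * ((t + q) * (t + s)) + s * d ≤ N := by
  by_contra! hN
  exact (h.2 (blockColoring t q s d)).elim (not_hasMonoSolution_blockColoring_zero hdt hdq)
    (not_hasMonoSolution_blockColoring_one ht hts hsq hdt hds hN)

end LowerBound

section ForcedColors

variable {χ : ℕ → Fin 2} {N t q s x y z : ℕ} {c : Fin 2}

theorem fin_two_eq_rev_iff_ne {a b : Fin 2} : a = b.rev ↔ a ≠ b := by
  revert a b
  decide

theorem color_z_eq_rev (hfree : ¬HasMonoSolution χ N t q c) (hx : χ x = c) (hy : χ y = c)
    (hsol : IsSolution N t q x y z := by simp [IsSolution]) : χ z = c.rev :=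
  fin_two_eq_rev_iff_ne.2 fun hz =>
    hfree ⟨x, y, z, hsol.1, hsol.2.1, hsol.2.2.1, hsol.2.2.2, hx, hy, hz⟩

theorem color_y_eq_rev (hfree : ¬HasMonoSolution χ N t q c) (hx : χ x = c) (hz : χ z = c)
    (hsol : IsSolution N t q x y z := by simp [IsSolution]) : χ y = c.rev :=
  fin_two_eq_rev_iff_ne.2 fun hy => fin_two_eq_rev_iff_ne.1 (color_z_eq_rev hfree hx hy hsol) hz

theorem color_x_eq_rev (hfree : ¬HasMonoSolution χ N t q c) (hy : χ y = c) (hz : χ z = c)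
    (hsol : IsSolution N t q x y z := by simp [IsSolution]) : χ x = c.rev :=
  fin_two_eq_rev_iff_ne.2 fun hx => fin_two_eq_rev_iff_ne.1 (color_z_eq_rev hfree hx hy hsol) hz

theorem color_mul_eq_rev (hfree : ¬HasMonoSolution χ N t q c) (hx : χ x = c) (ht : 0 < t)
    (hx0 : 0 < x) (hN : (t + q) * x ≤ N) : χ ((t + q) * x) = c.rev := by
  have x_le : x ≤ (t + q) * x := Nat.le_mul_of_pos_left x (by omega)
  have x_mem : x ∈ Finset.Icc 1 N := Finset.mem_Icc.2 ⟨hx0, x_le.trans hN⟩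
  have mul_mem : (t + q) * x ∈ Finset.Icc 1 N := Finset.mem_Icc.2 ⟨hx0.trans_le x_le, hN⟩
  exact color_z_eq_rev hfree hx hx ⟨x_mem, x_mem, mul_mem, (add_mul t q x).symm⟩

theorem color_eq_rev_of_mul (hfree : ¬HasMonoSolution χ N t q c) (hmul : χ ((t + q) * x) = c)
    (ht : 0 < t) (hx0 : 0 < x) (hN : (t + q) * x ≤ N) : χ x = c.rev :=
  fin_two_eq_rev_iff_ne.2 fun hx =>
    fin_two_eq_rev_iff_ne.1 (color_mul_eq_rev hfree hx ht hx0 hN) hmul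

theorem colors_of_color_one (hfree : ¬HasMonoSolution χ N t q c)
    (hfree_rev : ¬HasMonoSolution χ N t s c.rev) (h1 : χ 1 = c) (ht : 0 < t)
    (hN : (t + q) * (t + s) ≤ N) :
    χ (t + q) = c.rev ∧ χ ((t + q) * (t + s)) = c ∧ χ (t + s) = c.rev := by
  have hq : χ (t + q) = c.rev := by
    have le_N : (t + q) * 1 ≤ N := (Nat.mul_le_mul_left _ (by omega)).trans hN
    simpa using color_mul_eq_rev hfree h1 ht one_pos le_N
  have hmul : χ ((t + q) * (t + s)) = c := by
    rw [mul_comm] at hN ⊢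
    simpa using color_mul_eq_rev hfree_rev hq ht (by omega) hN
  exact ⟨hq, hmul, color_eq_rev_of_mul hfree hmul ht (by omega) hN⟩

end ForcedColors

section UpperBound

variable {χ : ℕ → Fin 2}

theorem hasMonoSolution_of_one_eq_zero (h1 : χ 1 = 0) :
    HasMonoSolution χ 274 2 10 0 ∨ HasMonoSolution χ 274 2 9 1 := by
  by_contra! ⟨free₀, free₁⟩
  obtain ⟨h12, h132, h11⟩ : χ 12 = 1 ∧ χ 132 = 0 ∧ χ 11 = 1 :=
    colors_of_color_one free₀ free₁ h1 (by norm_num) (by norm_num)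
  have h274 : χ 274 = 1 := color_z_eq_rev free₀ h132 h1
  have h28 : χ 28 = 0 := color_y_eq_rev free₁ h11 h274
  have h66 : χ 66 = 1 := color_z_eq_rev free₀ h28 h1
  have h6 : χ 6 = 0 := color_eq_rev_of_mul free₁ h66 (by norm_num) (by norm_num) (by norm_num)
  have h121 : χ 121 = 0 := color_z_eq_rev free₁ h11 h11
  have h252 : χ 252 = 1 := color_z_eq_rev free₀ h121 h1
  have h72 : χ 72 = 0 := color_x_eq_rev free₁ h12 h252
  have h72' : χ 72 = 1 := color_z_eq_rev free₀ h6 h6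
  simp [h72] at h72'

theorem hasMonoSolution_of_one_eq_one_of_two_eq_zero (h1 : χ 1 = 1) (h2 : χ 2 = 0) :
    HasMonoSolution χ 264 2 10 0 ∨ HasMonoSolution χ 264 2 9 1 := by
  by_contra! ⟨free₀, free₁⟩
  obtain ⟨h11, -, h12⟩ : χ 11 = 0 ∧ χ 132 = 1 ∧ χ 12 = 0 :=
    colors_of_color_one free₁ free₀ h1 (by norm_num) (by norm_num)
  have h24 : χ 24 = 1 := color_z_eq_rev free₀ h2 h2
  have h57 : χ 57 = 0 := color_z_eq_rev free₁ h24 h1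
  have h264 : χ 264 = 0 := color_z_eq_rev free₁ h24 h24
  have h15 : χ 15 = 1 := color_y_eq_rev free₀ h57 h264
  have h44 : χ 44 = 1 := color_z_eq_rev free₀ h12 h2
  have h142 : χ 142 = 1 := color_z_eq_rev free₀ h11 h12
  have h6 : χ 6 = 0 := color_y_eq_rev free₁ h44 h142
  have h42 : χ 42 = 1 := color_z_eq_rev free₀ h11 h2
  have h93 : χ 93 = 0 := color_z_eq_rev free₁ h42 h1
  have h246 : χ 246 = 1 := color_z_eq_rev free₀ h93 h6
  have h246' : χ 246 = 0 := color_z_eq_rev free₁ h15 h24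
  simp [h246] at h246'

theorem hasMonoSolution_of_one_eq_one_of_two_eq_one (h1 : χ 1 = 1) (h2 : χ 2 = 1) :
    HasMonoSolution χ 282 2 10 0 ∨ HasMonoSolution χ 282 2 9 1 := by
  by_contra! ⟨free₀, free₁⟩
  obtain ⟨h11, h132, h12⟩ : χ 11 = 0 ∧ χ 132 = 1 ∧ χ 12 = 0 :=
    colors_of_color_one free₁ free₀ h1 (by norm_num) (by norm_num)
  have h134 : χ 134 = 1 := color_z_eq_rev free₀ h12 h11
  have h58 : χ 58 = 0 := color_x_eq_rev free₁ h2 h134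
  have h236 : χ 236 = 1 := color_z_eq_rev free₀ h58 h12
  have h282 : χ 282 = 0 := color_z_eq_rev free₁ h132 h2
  have h26 : χ 26 = 1 := color_y_eq_rev free₀ h11 h282
  have h236' : χ 236 = 0 := color_z_eq_rev free₁ h1 h26
  simp [h236] at h236'

theorem forcesMonoSolution_two_ten_nine : ForcesMonoSolution 2 10 9 282 := by
  refine ⟨by norm_num, fun χ => ?_⟩
  rcases eq_or_ne (χ 1) 0 with h1 | h1
  · exact (hasMonoSolution_of_one_eq_zero h1).imp (.mono (by norm_num)) (.mono (by norm_num))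
  replace h1 : χ 1 = 1 := Fin.eq_one_of_ne_zero _ h1
  rcases eq_or_ne (χ 2) 0 with h2 | h2
  · exact (hasMonoSolution_of_one_eq_one_of_two_eq_zero h1 h2).imp
      (.mono (by norm_num)) (.mono (by norm_num))
  · exact hasMonoSolution_of_one_eq_one_of_two_eq_one h1 (Fin.eq_one_of_ne_zero _ h2)

end UpperBound

/-- `RR_2(10,9) = 282`: the least positive `N` such that every 2-coloring of
`{1,…,N}` admits a solution to `2x + 10y = z` monochromatic of color 0 or a
solution to `2x + 9y = z` monochromatic of color 1 is `282`. -/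
theorem RR_2_10_9 :
    IsLeast {N : ℕ | 0 < N ∧ ∀ χ : ℕ → Fin 2,
      (∃ x y z : ℕ, x ∈ Finset.Icc 1 N ∧ y ∈ Finset.Icc 1 N ∧
        z ∈ Finset.Icc 1 N ∧ 2 * x + 10 * y = z ∧ χ x = 0 ∧ χ y = 0 ∧ χ z = 0) ∨
      (∃ x y z : ℕ, x ∈ Finset.Icc 1 N ∧ y ∈ Finset.Icc 1 N ∧
        z ∈ Finset.Icc 1 N ∧ 2 * x + 9 * y = z ∧ χ x = 1 ∧ χ y = 1 ∧ χ z = 1)}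
      282 := by
  change IsLeast {N | ForcesMonoSolution 2 10 9 N} 282
  refine ⟨forcesMonoSolution_two_ten_nine, fun N hN => ?_⟩
  exact hN.mul_add_mul_le (d := 2) (by norm_num) (by norm_num) (by norm_num) (by norm_num)
    (by norm_num) (by norm_num)
end
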